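/- Let (Ω, μ) be a probability space and let D, Y, F, Z be random variables on Ω taking values in finite types. Suppose (i) Z is conditionally independent of the pair (D, Y) given F, i.e. for all values z, d, y, f one has P(Z=z, D=d, Y=y, F=f) · P(F=f) = P(Z=z, F=f) · P(D=d, Y=y, F=f) (the Markov chain (D,Y) → F → Z); (ii) Y is independent of D, i.e. P(Y=y, D=d) = P(Y=y) · P(D=d) for all y, d; and (iii) I(Z;Y) = I(F;Y). Then I(Z;D) ≤ I(Z;F) − I(F;Y). -/

import Mathlib

open MeasureTheory

/-- Probability that the random variable `X` takes the value `x`. -/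
noncomputable def prob {Ω : Type*} [MeasurableSpace Ω] (μ : Measure Ω)
    {α : Type*} (X : Ω → α) (x : α) : ℝ :=
  (μ (X ⁻¹' {x})).toReal

/-- Shannon entropy (natural logarithm) of a finitely-valued random variable. -/
noncomputable def entropy {Ω : Type*} [MeasurableSpace Ω] (μ : Measure Ω)
    {α : Type*} [Fintype α] (X : Ω → α) : ℝ :=
  -∑ x, prob μ X x * Real.log (prob μ X x)

/-- Conditional entropy `H(X|Y) = H(X,Y) - H(Y)`. -/
noncomputable def condEntropy {Ω : Type*} [MeasurableSpace Ω] (μ : Measure Ω)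
    {α β : Type*} [Fintype α] [Fintype β] (X : Ω → α) (Y : Ω → β) : ℝ :=
  entropy μ (fun ω => (X ω, Y ω)) - entropy μ Y

/-- Mutual information `I(X;Y) = H(X) + H(Y) - H(X,Y)`. -/
noncomputable def mutualInfo {Ω : Type*} [MeasurableSpace Ω] (μ : Measure Ω)
    {α β : Type*} [Fintype α] [Fintype β] (X : Ω → α) (Y : Ω → β) : ℝ :=
  entropy μ X + entropy μ Y - entropy μ (fun ω => (X ω, Y ω))

/-- Conditional mutual information `I(X;Y|Z) = H(X|Z) + H(Y|Z) - H(⟨X,Y⟩|Z)`. -/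
noncomputable def condMutualInfo {Ω : Type*} [MeasurableSpace Ω] (μ : Measure Ω)
    {α β γ : Type*} [Fintype α] [Fintype β] [Fintype γ]
    (X : Ω → α) (Y : Ω → β) (Z : Ω → γ) : ℝ :=
  condEntropy μ X Z + condEntropy μ Y Z - condEntropy μ (fun ω => (X ω, Y ω)) Z

/-!
The theorem specializes the Shannon inequality
`I(Z;D) + I(Z;Y) ≤ I(Z;F) + I(D;Y) + I(Z;(D,Y)|F)` to the case where the last two terms vanish.
Expanding `I(X;(Y,Z))` by the chain rule in the two possible orders and dropping a nonnegative term
gives `I(X;Y) ≤ I(X;Z) + I(X;Y|Z)`. The Shannon inequality follows by applying this once to pass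
from `(D,Y)` to `F` and once to remove the conditioning in `I(Z;(D,Y)) = I(Z;Y) + I(Z;D|Y)`.
-/

lemma sum_mul_log_sub_log_nonneg {ι : Type*} [Fintype ι] {p q : ι → ℝ} (hp : ∀ i, 0 ≤ p i)
    (hq : ∀ i, 0 ≤ q i) (hpq : ∀ i, q i = 0 → p i = 0) (hsum : ∑ i, q i ≤ ∑ i, p i) :
    0 ≤ ∑ i, p i * (Real.log (p i) - Real.log (q i)) := by
  have sub_le_mul_log (i : ι) : p i - q i ≤ p i * (Real.log (p i) - Real.log (q i)) := by
    obtain hp0 | hp0 := (hp i).eq_or_lt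
    · simp [← hp0, hq i]
    have hq0 : 0 < q i := (hq i).lt_of_ne fun h => hp0.ne' (hpq i h.symm)
    calc p i - q i = p i * (1 - (p i / q i)⁻¹) := by field_simp
      _ ≤ p i * Real.log (p i / q i) := by
        gcongr
        exact Real.one_sub_inv_le_log_of_pos (by positivity)
      _ = p i * (Real.log (p i) - Real.log (q i)) := by rw [Real.log_div hp0.ne' hq0.ne']
  calc 0 ≤ ∑ i, (p i - q i) := by rw [Finset.sum_sub_distrib]; linarith
    _ ≤ _ := Finset.sum_le_sum fun i _ => sub_le_mul_log i

section

variable {Ω : Type*} [MeasurableSpace Ω] {μ : Measure Ω} {α β γ : Type*}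

lemma prob_nonneg (X : Ω → α) (x : α) : 0 ≤ prob μ X x :=
  ENNReal.toReal_nonneg

lemma prob_comp_of_injective {g : α → β} (hg : g.Injective) (X : Ω → α) (x : α) :
    prob μ (fun ω => g (X ω)) (g x) = prob μ X x := by
  simp only [prob, Set.preimage, Set.mem_singleton_iff, hg.eq_iff]

lemma prob_comp_of_notMem_range {g : α → β} {y : β} (hy : y ∉ Set.range g) (X : Ω → α) :
    prob μ (fun ω => g (X ω)) y = 0 := by
  have : (fun ω => g (X ω)) ⁻¹' {y} = ∅ :=
    Set.eq_empty_of_forall_notMem fun ω hω => hy ⟨X ω, hω⟩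
  simp [prob, this]

section EntropyIdentities

variable [Fintype α] [Fintype β] [Fintype γ]

lemma entropy_comp_of_injective {g : α → β} (hg : g.Injective) (X : Ω → α) :
    entropy μ (fun ω => g (X ω)) = entropy μ X := by
  refine congrArg Neg.neg (Fintype.sum_of_injective g hg _ _ (fun y hy => ?_) fun x => ?_).symm
  · rw [prob_comp_of_notMem_range hy, zero_mul]
  · rw [prob_comp_of_injective hg]

lemma entropy_prodMk_comm (X : Ω → α) (Y : Ω → β) :
    entropy μ (fun ω => (X ω, Y ω)) = entropy μ (fun ω => (Y ω, X ω)) :=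
  entropy_comp_of_injective Prod.swap_injective fun ω => (Y ω, X ω)

lemma entropy_prodMk_assoc (X : Ω → α) (Y : Ω → β) (Z : Ω → γ) :
    entropy μ (fun ω => ((X ω, Y ω), Z ω)) = entropy μ (fun ω => (X ω, Y ω, Z ω)) :=
  entropy_comp_of_injective (Equiv.prodAssoc α β γ).symm.injective fun ω => (X ω, Y ω, Z ω)

lemma mutualInfo_comm (X : Ω → α) (Y : Ω → β) : mutualInfo μ X Y = mutualInfo μ Y X := by
  rw [mutualInfo, mutualInfo, entropy_prodMk_comm, add_comm (entropy μ X)]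

lemma mutualInfo_comp_right_of_injective {g : β → γ} (hg : g.Injective) (X : Ω → α) (Y : Ω → β) :
    mutualInfo μ X (fun ω => g (Y ω)) = mutualInfo μ X Y := by
  have h_joint : entropy μ (fun ω => (X ω, g (Y ω))) = entropy μ (fun ω => (X ω, Y ω)) :=
    entropy_comp_of_injective (Function.injective_id.prodMap hg) fun ω => (X ω, Y ω)
  rw [mutualInfo, mutualInfo, entropy_comp_of_injective hg, h_joint]

lemma condMutualInfo_comm (X : Ω → α) (Y : Ω → β) (Z : Ω → γ) :
    condMutualInfo μ X Y Z = condMutualInfo μ Y X Z := by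
  have h_joint : entropy μ (fun ω => ((X ω, Y ω), Z ω)) = entropy μ (fun ω => ((Y ω, X ω), Z ω)) :=
    entropy_comp_of_injective (Prod.swap_injective.prodMap Function.injective_id)
      fun ω => ((Y ω, X ω), Z ω)
  simp only [condMutualInfo, condEntropy, h_joint]
  ring

lemma mutualInfo_prodMk_right (X : Ω → α) (Y : Ω → β) (Z : Ω → γ) :
    mutualInfo μ X (fun ω => (Y ω, Z ω)) = mutualInfo μ X Z + condMutualInfo μ X Y Z := by
  simp only [mutualInfo, condMutualInfo, condEntropy, entropy_prodMk_assoc]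
  ring

end EntropyIdentities

section Marginals

variable [IsFiniteMeasure μ]

lemma prob_le_prob_comp (X : Ω → α) (g : α → β) (x : α) :
    prob μ X x ≤ prob μ (fun ω => g (X ω)) (g x) :=
  measureReal_mono fun _ hω => congrArg g hω

variable [Fintype α] [MeasurableSpace α] [MeasurableSingletonClass α]

lemma sum_prob_prodMk_left {X : Ω → α} (hX : Measurable X) (Y : Ω → β) (y : β) :
    ∑ x, prob μ (fun ω => (X ω, Y ω)) (x, y) = prob μ Y y := by
  have hX_fiber (x : α) : MeasurableSet (X ⁻¹' {x}) := hX (measurableSet_singleton x)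
  have prob_eq_restrict (x : α) :
      prob μ (fun ω => (X ω, Y ω)) (x, y) = (μ.restrict (Y ⁻¹' {y})).real (X ⁻¹' {x}) := by
    rw [measureReal_restrict_apply (hX_fiber x), prob, ← Set.singleton_prod_singleton,
      Set.mk_preimage_prod, measureReal_def]
  simp only [prob_eq_restrict]
  rw [sum_measureReal_preimage_singleton _ fun x _ => hX_fiber x, Finset.coe_univ,
    Set.preimage_univ, measureReal_restrict_apply_univ, measureReal_def, prob]

lemma prob_comp_eq_sum [DecidableEq β] {X : Ω → α} (hX : Measurable X) (g : α → β) (y : β) :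
    prob μ (fun ω => g (X ω)) y = ∑ x with g x = y, prob μ X x := by
  have h_fiber : (fun ω => g (X ω)) ⁻¹' {y} = X ⁻¹' ({x | g x = y} : Finset α) := by
    ext ω
    simp
  exact (congrArg μ.real h_fiber).trans
    (sum_measureReal_preimage_singleton _ fun x _ => hX (measurableSet_singleton x)).symm

lemma sum_prob_comp_mul [Fintype β] {X : Ω → α} (hX : Measurable X) (g : α → β) (φ : β → ℝ) :
    ∑ y, prob μ (fun ω => g (X ω)) y * φ y = ∑ x, prob μ X x * φ (g x) := by
  classical
  rw [← Finset.sum_fiberwise Finset.univ g]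
  refine Finset.sum_congr rfl fun y _ => ?_
  rw [prob_comp_eq_sum hX, Finset.sum_mul]
  exact Finset.sum_congr rfl fun x hx => by rw [(Finset.mem_filter.mp hx).2]

lemma sum_prob_comp [Fintype β] {X : Ω → α} (hX : Measurable X) (g : α → β) :
    ∑ y, prob μ (fun ω => g (X ω)) y = ∑ x, prob μ X x := by
  simpa using sum_prob_comp_mul (μ := μ) hX g 1

lemma entropy_comp [Fintype β] {X : Ω → α} (hX : Measurable X) (g : α → β) :
    entropy μ (fun ω => g (X ω)) =
      -∑ x, prob μ X x * Real.log (prob μ (fun ω => g (X ω)) (g x)) :=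
  congrArg Neg.neg (sum_prob_comp_mul hX g _)

lemma mutualInfo_eq_zero_of_indep [Fintype β] [MeasurableSpace β] [MeasurableSingletonClass β]
    {X : Ω → α} {Y : Ω → β} (hX : Measurable X) (hY : Measurable Y)
    (h : ∀ x y, prob μ (fun ω => (X ω, Y ω)) (x, y) = prob μ X x * prob μ Y y) :
    mutualInfo μ X Y = 0 := by
  have hX_entropy := entropy_comp (μ := μ) (hX.prodMk hY) Prod.fst
  have hY_entropy := entropy_comp (μ := μ) (hX.prodMk hY) Prod.snd
  have log_mul_marginals (w : α × β) :
      prob μ (fun ω => (X ω, Y ω)) w * Real.log (prob μ (fun ω => (X ω, Y ω)) w) =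
        prob μ (fun ω => (X ω, Y ω)) w * Real.log (prob μ X w.1) +
          prob μ (fun ω => (X ω, Y ω)) w * Real.log (prob μ Y w.2) := by
    rw [h w.1 w.2]
    by_cases hx : prob μ X w.1 = 0
    · simp [hx]
    by_cases hy : prob μ Y w.2 = 0
    · simp [hy]
    rw [Real.log_mul hx hy, mul_add]
  rw [mutualInfo, hX_entropy, hY_entropy, entropy]
  simp only [log_mul_marginals, Finset.sum_add_distrib]
  ring

end Marginals

/-- The mass function under which `X` and `Y` are conditionally independent given `Z`, with the same
joint laws of `(X, Z)` and of `(Y, Z)` as under `μ`. The conditional mutual information `I(X;Y|Z)`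
is the relative entropy of the joint law of `((X, Y), Z)` with respect to it. Division by zero makes
it vanish where `P(Z = z) = 0`. -/
noncomputable def condProdProb (μ : Measure Ω) (X : Ω → α) (Y : Ω → β) (Z : Ω → γ)
    (w : (α × β) × γ) : ℝ :=
  prob μ (fun ω => (X ω, Z ω)) (w.1.1, w.2) * prob μ (fun ω => (Y ω, Z ω)) (w.1.2, w.2) /
    prob μ Z w.2

lemma condProdProb_nonneg (X : Ω → α) (Y : Ω → β) (Z : Ω → γ) (w : (α × β) × γ) :
    0 ≤ condProdProb μ X Y Z w :=
  div_nonneg (mul_nonneg (prob_nonneg _ _) (prob_nonneg _ _)) (prob_nonneg _ _)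

section CondMutualInfo

variable [IsFiniteMeasure μ]

lemma marginals_pos_of_prob_pos {X : Ω → α} {Y : Ω → β} {Z : Ω → γ} {w : (α × β) × γ}
    (hw : 0 < prob μ (fun ω => ((X ω, Y ω), Z ω)) w) :
    0 < prob μ (fun ω => (X ω, Z ω)) (w.1.1, w.2) ∧
      0 < prob μ (fun ω => (Y ω, Z ω)) (w.1.2, w.2) ∧ 0 < prob μ Z w.2 :=
  ⟨hw.trans_le (prob_le_prob_comp _ (fun w => (w.1.1, w.2)) w),
    hw.trans_le (prob_le_prob_comp _ (fun w => (w.1.2, w.2)) w),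
    hw.trans_le (prob_le_prob_comp _ Prod.snd w)⟩

lemma prob_eq_zero_of_condProdProb_eq_zero {X : Ω → α} {Y : Ω → β} {Z : Ω → γ} {w : (α × β) × γ}
    (h : condProdProb μ X Y Z w = 0) : prob μ (fun ω => ((X ω, Y ω), Z ω)) w = 0 := by
  by_contra hne
  obtain ⟨hXZ, hYZ, hZ⟩ := marginals_pos_of_prob_pos ((prob_nonneg _ _).lt_of_ne' hne)
  exact (div_pos (mul_pos hXZ hYZ) hZ).ne' h

variable [Fintype α] [Fintype β] [Fintype γ]
  [MeasurableSpace α] [MeasurableSingletonClass α]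
  [MeasurableSpace β] [MeasurableSingletonClass β]
  {X : Ω → α} {Y : Ω → β} {Z : Ω → γ}

lemma sum_condProdProb (hX : Measurable X) (hY : Measurable Y) (Z : Ω → γ) :
    ∑ w, condProdProb μ X Y Z w = ∑ z, prob μ Z z := by
  rw [Fintype.sum_prod_type_right]
  refine Finset.sum_congr rfl fun z _ => ?_
  calc ∑ xy, condProdProb μ X Y Z (xy, z)
      = (∑ x, prob μ (fun ω => (X ω, Z ω)) (x, z)) * (∑ y, prob μ (fun ω => (Y ω, Z ω)) (y, z)) /
          prob μ Z z := by
        rw [Fintype.sum_prod_type, Fintype.sum_mul_sum]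
        simp only [condProdProb, Finset.sum_div]
    _ = prob μ Z z * prob μ Z z / prob μ Z z := by
        rw [sum_prob_prodMk_left hX, sum_prob_prodMk_left hY]
    _ = prob μ Z z := mul_self_div_self _

variable [MeasurableSpace γ] [MeasurableSingletonClass γ]

lemma condMutualInfo_eq_sum (hX : Measurable X) (hY : Measurable Y) (hZ : Measurable Z) :
    condMutualInfo μ X Y Z =
      ∑ w, prob μ (fun ω => ((X ω, Y ω), Z ω)) w *
        (Real.log (prob μ (fun ω => ((X ω, Y ω), Z ω)) w) -
          Real.log (condProdProb μ X Y Z w)) := by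
  have hXYZ : Measurable fun ω => ((X ω, Y ω), Z ω) := (hX.prodMk hY).prodMk hZ
  have hXZ_entropy := entropy_comp (μ := μ) hXYZ fun w => (w.1.1, w.2)
  have hYZ_entropy := entropy_comp (μ := μ) hXYZ fun w => (w.1.2, w.2)
  have hZ_entropy := entropy_comp (μ := μ) hXYZ Prod.snd
  have log_condProdProb (w : (α × β) × γ) :
      prob μ (fun ω => ((X ω, Y ω), Z ω)) w * Real.log (condProdProb μ X Y Z w) =
        prob μ (fun ω => ((X ω, Y ω), Z ω)) w *
          (Real.log (prob μ (fun ω => (X ω, Z ω)) (w.1.1, w.2)) +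
            Real.log (prob μ (fun ω => (Y ω, Z ω)) (w.1.2, w.2)) - Real.log (prob μ Z w.2)) := by
    obtain hw | hw := (prob_nonneg (μ := μ) (fun ω => ((X ω, Y ω), Z ω)) w).eq_or_lt
    · simp [← hw]
    obtain ⟨hXZ, hYZ, hZ⟩ := marginals_pos_of_prob_pos hw
    rw [condProdProb, Real.log_div (by positivity) hZ.ne', Real.log_mul hXZ.ne' hYZ.ne']
  simp only [mul_sub, log_condProdProb, mul_add, Finset.sum_sub_distrib, Finset.sum_add_distrib]
  rw [condMutualInfo, condEntropy, condEntropy, condEntropy, hXZ_entropy, hYZ_entropy, hZ_entropy,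
    entropy]
  ring

lemma condMutualInfo_nonneg (hX : Measurable X) (hY : Measurable Y) (hZ : Measurable Z) :
    0 ≤ condMutualInfo μ X Y Z := by
  rw [condMutualInfo_eq_sum hX hY hZ]
  refine sum_mul_log_sub_log_nonneg (prob_nonneg _) (condProdProb_nonneg X Y Z)
    (fun w => prob_eq_zero_of_condProdProb_eq_zero) ?_
  rw [sum_condProdProb hX hY]
  exact (sum_prob_comp ((hX.prodMk hY).prodMk hZ) Prod.snd).le

lemma condMutualInfo_eq_zero_of_condIndep (hX : Measurable X) (hY : Measurable Y)
    (hZ : Measurable Z)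
    (h : ∀ x y z, prob μ (fun ω => ((X ω, Y ω), Z ω)) ((x, y), z) * prob μ Z z =
      prob μ (fun ω => (X ω, Z ω)) (x, z) * prob μ (fun ω => (Y ω, Z ω)) (y, z)) :
    condMutualInfo μ X Y Z = 0 := by
  rw [condMutualInfo_eq_sum hX hY hZ]
  refine Finset.sum_eq_zero fun w _ => ?_
  obtain hw | hw := (prob_nonneg (μ := μ) (fun ω => ((X ω, Y ω), Z ω)) w).eq_or_lt
  · rw [← hw, zero_mul]
  obtain ⟨-, -, hZw⟩ := marginals_pos_of_prob_pos hw
  rw [condProdProb, ← h w.1.1 w.1.2 w.2, mul_div_cancel_right₀ _ hZw.ne', sub_self, mul_zero]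

lemma mutualInfo_le_add_condMutualInfo (hX : Measurable X) (hY : Measurable Y)
    (hZ : Measurable Z) : mutualInfo μ X Y ≤ mutualInfo μ X Z + condMutualInfo μ X Y Z := by
  calc mutualInfo μ X Y
      ≤ mutualInfo μ X Y + condMutualInfo μ X Z Y :=
        le_add_of_nonneg_right (condMutualInfo_nonneg hX hZ hY)
    _ = mutualInfo μ X (fun ω => (Z ω, Y ω)) := (mutualInfo_prodMk_right X Z Y).symm
    _ = mutualInfo μ X (fun ω => (Y ω, Z ω)) :=
        mutualInfo_comp_right_of_injective Prod.swap_injective X fun ω => (Y ω, Z ω)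
    _ = mutualInfo μ X Z + condMutualInfo μ X Y Z := mutualInfo_prodMk_right X Y Z

lemma mutualInfo_add_mutualInfo_le (hX : Measurable X) (hY : Measurable Y) (hZ : Measurable Z) :
    mutualInfo μ X Y + mutualInfo μ X Z ≤
      mutualInfo μ X (fun ω => (Y ω, Z ω)) + mutualInfo μ Y Z := by
  have h := mutualInfo_le_add_condMutualInfo (μ := μ) hY hX hZ
  rw [mutualInfo_comm Y X, condMutualInfo_comm Y X] at h
  rw [mutualInfo_prodMk_right]
  linarith

end CondMutualInfo

end

theorem stmt0_general
    {Ω : Type*} [MeasurableSpace Ω] (μ : Measure Ω) [IsFiniteMeasure μ]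
    {𝓓 𝓨 𝓕 𝓩 : Type*} [Fintype 𝓓] [Fintype 𝓨] [Fintype 𝓕] [Fintype 𝓩]
    [MeasurableSpace 𝓓] [MeasurableSingletonClass 𝓓]
    [MeasurableSpace 𝓨] [MeasurableSingletonClass 𝓨]
    [MeasurableSpace 𝓕] [MeasurableSingletonClass 𝓕]
    [MeasurableSpace 𝓩] [MeasurableSingletonClass 𝓩]
    (D : Ω → 𝓓) (Y : Ω → 𝓨) (F : Ω → 𝓕) (Z : Ω → 𝓩)
    (hD : Measurable D) (hY : Measurable Y) (hF : Measurable F) (hZ : Measurable Z) :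
    mutualInfo μ Z D + mutualInfo μ Z Y ≤
      mutualInfo μ Z F + mutualInfo μ D Y + condMutualInfo μ Z (fun ω => (D ω, Y ω)) F := by
  have h_pair := mutualInfo_add_mutualInfo_le (μ := μ) hZ hD hY
  have h_feature := mutualInfo_le_add_condMutualInfo (μ := μ) hZ (hD.prodMk hY) hF
  linarith

/-- Proposition 4.1: if `(D,Y) → F → Z` is a Markov chain, `Y` is independent of `D`,
and `Z` is sufficient for `F` in the sense that `I(Z;Y) = I(F;Y)`, then
`I(Z;D) ≤ I(Z;F) - I(F;Y)`. -/
theorem stmt0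
    {Ω : Type*} [MeasurableSpace Ω] (μ : Measure Ω) [IsProbabilityMeasure μ]
    {𝓓 𝓨 𝓕 𝓩 : Type*} [Fintype 𝓓] [Fintype 𝓨] [Fintype 𝓕] [Fintype 𝓩]
    [MeasurableSpace 𝓓] [MeasurableSingletonClass 𝓓]
    [MeasurableSpace 𝓨] [MeasurableSingletonClass 𝓨]
    [MeasurableSpace 𝓕] [MeasurableSingletonClass 𝓕]
    [MeasurableSpace 𝓩] [MeasurableSingletonClass 𝓩]
    (D : Ω → 𝓓) (Y : Ω → 𝓨) (F : Ω → 𝓕) (Z : Ω → 𝓩)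
    (hD : Measurable D) (hY : Measurable Y) (hF : Measurable F) (hZ : Measurable Z)
    (hMarkov : ∀ (z : 𝓩) (d : 𝓓) (y : 𝓨) (f : 𝓕),
      prob μ (fun ω => (Z ω, D ω, Y ω, F ω)) (z, d, y, f) * prob μ F f =
        prob μ (fun ω => (Z ω, F ω)) (z, f) *
          prob μ (fun ω => (D ω, Y ω, F ω)) (d, y, f))
    (hIndep : ∀ (y : 𝓨) (d : 𝓓),
      prob μ (fun ω => (Y ω, D ω)) (y, d) = prob μ Y y * prob μ D d)
    (hSuff : mutualInfo μ Z Y = mutualInfo μ F Y) :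
    mutualInfo μ Z D ≤ mutualInfo μ Z F - mutualInfo μ F Y := by
  have h_markov : condMutualInfo μ Z (fun ω => (D ω, Y ω)) F = 0 :=
    condMutualInfo_eq_zero_of_condIndep hZ (hD.prodMk hY) hF fun z (d, y) f => by
      simpa only [prob, ← Set.singleton_prod_singleton, Set.mk_preimage_prod, Set.inter_assoc]
        using hMarkov z d y f
  have h_indep : mutualInfo μ D Y = 0 := by
    rw [mutualInfo_comm, mutualInfo_eq_zero_of_indep hY hD hIndep]
  linarith [stmt0_general μ D Y F Z hD hY hF hZ]
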